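/- Let d ≥ 1, 2 < p ≤ ∞, 0 < γ < 2d(1/2 − 1/p) and a ≥ 0. Set ‖u‖_X = max(‖u‖_{L²}, ‖u‖_{L̂^p}). There is a constant C depending only on d, γ and p (independent of a) such that for all Schwartz functions f₁, f₂, f₃ on ℝ^d, ‖H_{a,γ}(f₁, f₂, f₃)‖_X ≤ C ‖f₁‖_X ‖f₂‖_X ‖f₃‖_X. -/

import Mathlib

open MeasureTheory Real FourierTransform
open scoped ENNReal

/-- The Hartree trilinear operator
`H_{a,γ}(f,g,h)(x) = ((e^{-a|·|} |·|^{-γ}) ∗ (f ḡ))(x) · h(x)` on `ℝ^d`. -/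
noncomputable def hartreeOp (d : ℕ) (a γ : ℝ)
    (f g h : EuclideanSpace ℝ (Fin d) → ℂ) : EuclideanSpace ℝ (Fin d) → ℂ :=
  fun x =>
    (∫ y : EuclideanSpace ℝ (Fin d),
      ((Real.exp (-(a * ‖y‖)) * ‖y‖ ^ (-γ) : ℝ) : ℂ) *
        (f (x - y) * (starRingEnd ℂ) (g (x - y)))) * h x

/-- The `X = L² ∩ L̂^p` norm `‖u‖_X = max(‖u‖_{L²}, ‖𝓕u‖_{L^{p'}})`. -/
noncomputable def Xnorm (d : ℕ) (p' : ℝ≥0∞)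
    (u : EuclideanSpace ℝ (Fin d) → ℂ) : ℝ≥0∞ :=
  max (eLpNorm u 2 volume) (eLpNorm (𝓕 u) p' volume)

namespace HartreeAux

lemma schlomilch {c : ℝ} (hc : 0 < c) :
    ∫⁻ v in Set.Ioi (0:ℝ), ENNReal.ofReal (rexp (-(v - c / v) ^ 2)) = ENNReal.ofReal (√π / 2) := by
  set g : ℝ → ℝ≥0∞ := fun v => ENNReal.ofReal (rexp (-(v - c / v) ^ 2)) with hg
  have hgm : Measurable g := by simp only [hg]; fun_prop
  have hder : ∀ v ∈ Set.Ioi (0:ℝ), HasDerivWithinAt (fun v => c / v) (-(c / v ^ 2)) (Set.Ioi 0) v := by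
    intro v hv
    have hv' : v ≠ 0 := ne_of_gt hv
    have := ((hasDerivAt_inv hv').const_mul c).hasDerivWithinAt (s := Set.Ioi 0)
    simp only [div_eq_mul_inv]
    convert! this using 1
    ring
  -- symmetry
  have h1 : ∫⁻ v in Set.Ioi (0:ℝ), g v = ∫⁻ v in Set.Ioi (0:ℝ), ENNReal.ofReal (c / v ^ 2) * g v := by
    have him : (fun v => c / v) '' Set.Ioi (0:ℝ) = Set.Ioi 0 := by
      ext w
      simp only [Set.mem_image, Set.mem_Ioi]
      constructor
      · rintro ⟨v, hv, rfl⟩; positivity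
      · intro hw; exact ⟨c / w, by positivity, by field_simp⟩
    have := lintegral_image_eq_lintegral_abs_deriv_mul measurableSet_Ioi hder (by
      intro v hv w hw h
      have hv' : v ≠ 0 := ne_of_gt hv
      have hw' : w ≠ 0 := ne_of_gt hw
      simp only at h
      field_simp at h
      exact h.symm) g
    rw [him] at this
    rw [this]
    refine setLIntegral_congr_fun measurableSet_Ioi ?_
    intro v hv
    have hv' : (0:ℝ) < v := hv
    simp only
    rw [abs_neg, abs_of_pos (by positivity)]
    congr 1
    simp only [hg]
    congr 3
    have : c / (c / v) = v := by field_simp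
    rw [this]; ring
  have h2 : ∫⁻ w : ℝ, ENNReal.ofReal (rexp (-w ^ 2)) =
      ∫⁻ v in Set.Ioi (0:ℝ), ENNReal.ofReal (1 + c / v ^ 2) * g v := by
    have hder2 : ∀ v ∈ Set.Ioi (0:ℝ), HasDerivWithinAt (fun v => v - c / v) (1 + (c / v ^ 2)) (Set.Ioi 0) v := by
      intro v hv
      have := (hasDerivWithinAt_id v (Set.Ioi 0)).sub (hder v hv)
      convert! this using 1
      ring
    have him : (fun v => v - c / v) '' Set.Ioi (0:ℝ) = Set.univ := by
      ext w
      simp only [Set.mem_image, Set.mem_Ioi, Set.mem_univ, iff_true]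
      have hs : √(w ^ 2 + 4 * c) ^ 2 = w ^ 2 + 4 * c := Real.sq_sqrt (by positivity)
      have hlt : |w| < √(w ^ 2 + 4 * c) := by
        apply Real.lt_sqrt_of_sq_lt; rw [sq_abs]; linarith
      have hpos : 0 < (w + √(w ^ 2 + 4 * c)) / 2 := by
        have := neg_abs_le w; linarith
      refine ⟨(w + √(w ^ 2 + 4 * c)) / 2, hpos, ?_⟩
      have h3 : (w + √(w ^ 2 + 4 * c)) ≠ 0 := by intro h; rw [h] at hpos; simp at hpos
      field_simp
      nlinarith
    have := lintegral_image_eq_lintegral_abs_deriv_mul measurableSet_Ioi hder2 (by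
      intro v hv w hw h
      have hv' : 0 < v := hv
      have hw' : 0 < w := hw
      simp only at h
      have : (v - w) * (1 + c / (v * w)) = 0 := by
        have e : (v - w) * (1 + c / (v * w)) = (v - c / v) - (w - c / w) := by field_simp; ring
        rw [e, h]; ring
      rcases mul_eq_zero.1 this with h | h
      · linarith
      · have : 0 < 1 + c / (v * w) := by positivity
        linarith) (fun w => ENNReal.ofReal (rexp (-w ^ 2)))
    rw [him] at this
    simp only [Measure.restrict_univ] at this
    rw [this]
    refine setLIntegral_congr_fun measurableSet_Ioi ?_
    intro v hv
    have hv' : (0:ℝ) < v := hv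
    simp only [hg]
    rw [abs_of_pos (by positivity)]
  have h3 : ∫⁻ w : ℝ, ENNReal.ofReal (rexp (-w ^ 2)) = ENNReal.ofReal √π := by
    have := integral_gaussian 1
    simp only [neg_mul, one_mul, div_one] at this
    rw [← this, ofReal_integral_eq_lintegral_ofReal]
    · simpa using integrable_exp_neg_mul_sq (b := 1) one_pos
    · exact Filter.Eventually.of_forall fun _ => (exp_pos _).le
  have h4 : ∫⁻ v in Set.Ioi (0:ℝ), ENNReal.ofReal (1 + c / v ^ 2) * g v =
      (∫⁻ v in Set.Ioi (0:ℝ), g v) + ∫⁻ v in Set.Ioi (0:ℝ), ENNReal.ofReal (c / v ^ 2) * g v := by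
    rw [← lintegral_add_left hgm]
    refine setLIntegral_congr_fun measurableSet_Ioi ?_
    intro v hv
    have hv' : (0:ℝ) < v := hv
    simp only
    rw [ENNReal.ofReal_add zero_le_one (by positivity), ENNReal.ofReal_one, add_mul, one_mul]
  rw [← h1, ← h2, h3, ← two_mul] at h4
  rw [ENNReal.ofReal_div_of_pos two_pos, h4]
  rw [ENNReal.ofReal_ofNat, mul_comm, ENNReal.mul_div_cancel_right (by simp) (by simp)]

lemma subord {c : ℝ} (hc : 0 ≤ c) :
    ∫⁻ v in Set.Ioi (0:ℝ), ENNReal.ofReal (2 / √π * rexp (-v ^ 2)) * ENNReal.ofReal (rexp (-(c ^ 2 / (4 * v ^ 2)))) =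
      ENNReal.ofReal (rexp (-c)) := by
  rcases hc.eq_or_lt with rfl | hc
  · have := integral_gaussian_Ioi 1
    simp only [neg_mul, one_mul, div_one] at this
    simp only [ne_eq, OfNat.ofNat_ne_zero, not_false_eq_true, zero_pow, zero_div, neg_zero, exp_zero, ENNReal.ofReal_one, mul_one]
    rw [← ofReal_integral_eq_lintegral_ofReal, integral_const_mul, this]
    · have : 2 / √π * (√π / 2) = 1 := by field_simp
      rw [this]; simp
    · apply Integrable.const_mul
      have h := (integrable_exp_neg_mul_sq (b := 1) one_pos).integrableOn (s := Set.Ioi 0)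
      simp only [neg_mul, one_mul] at h
      exact h
    · exact Filter.Eventually.of_forall fun _ => by positivity
  · have := schlomilch (c := c / 2) (by positivity)
    have e : ∀ v ∈ Set.Ioi (0:ℝ), ENNReal.ofReal (2 / √π * rexp (-v ^ 2)) * ENNReal.ofReal (rexp (-(c ^ 2 / (4 * v ^ 2)))) = ENNReal.ofReal (2 / √π * rexp (-c)) * ENNReal.ofReal (rexp (-(v - (c/2) / v) ^ 2)) := by
      intro v hv
      have hv' : (0:ℝ) < v := hv
      rw [← ENNReal.ofReal_mul (by positivity), ← ENNReal.ofReal_mul (by positivity), mul_assoc, mul_assoc, ← exp_add, ← exp_add]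
      congr 3
      field_simp
      ring
    rw [setLIntegral_congr_fun measurableSet_Ioi e, lintegral_const_mul _ (by fun_prop), this, ← ENNReal.ofReal_mul (by positivity)]
    congr 1; field_simp

/-- first factor of the mixing measure -/
noncomputable def mu1 (γ : ℝ) : Measure ℝ :=
  (volume.restrict (Set.Ioi 0)).withDensity fun t => ENNReal.ofReal (t ^ (γ / 2 - 1) / Real.Gamma (γ / 2))

noncomputable def mu2 : Measure ℝ :=
  (volume.restrict (Set.Ioi 0)).withDensity fun v => ENNReal.ofReal (2 / √π * rexp (-v ^ 2))

noncomputable def bb (a : ℝ) (w : ℝ × ℝ) : ℝ := w.1 + a ^ 2 / (4 * w.2 ^ 2)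

noncomputable def mu (γ : ℝ) : Measure (ℝ × ℝ) := (mu1 γ).prod mu2

instance (γ : ℝ) : SFinite (mu1 γ) := by unfold mu1; infer_instance
instance : SFinite mu2 := by unfold mu2; infer_instance
instance (γ : ℝ) : SFinite (mu γ) := by unfold mu; infer_instance

lemma measurable_bb (a : ℝ) : Measurable (bb a) := by unfold bb; fun_prop

lemma lintegral_mu1 (γ : ℝ) {g : ℝ → ℝ≥0∞} (hg : Measurable g) :
    ∫⁻ t, g t ∂(mu1 γ) = ∫⁻ t in Set.Ioi (0:ℝ), ENNReal.ofReal (t ^ (γ / 2 - 1) / Real.Gamma (γ / 2)) * g t := by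
  unfold mu1
  rw [lintegral_withDensity_eq_lintegral_mul _ (by fun_prop) hg]
  rfl

lemma lintegral_mu2 {g : ℝ → ℝ≥0∞} (hg : Measurable g) :
    ∫⁻ t, g t ∂mu2 = ∫⁻ v in Set.Ioi (0:ℝ), ENNReal.ofReal (2 / √π * rexp (-v ^ 2)) * g v := by
  unfold mu2
  rw [lintegral_withDensity_eq_lintegral_mul _ (by fun_prop) hg]
  rfl

lemma mu2_univ : mu2 Set.univ = 1 := by
  have := subord (c := 0) le_rfl
  rw [← lintegral_one, lintegral_mu2 measurable_const]
  simpa using this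

lemma ae_mu1 (γ : ℝ) : ∀ᵐ t ∂(mu1 γ), 0 < t := by
  unfold mu1
  exact (withDensity_absolutelyContinuous _ _).ae_le (ae_restrict_mem measurableSet_Ioi)

lemma bb_pos (γ a : ℝ) : ∀ᵐ w ∂(mu γ), 0 < bb a w := by
  unfold mu
  have : ∀ᵐ w ∂((mu1 γ).prod mu2), 0 < w.1 := Measure.quasiMeasurePreserving_fst.ae (ae_mu1 γ)
  filter_upwards [this] with w hw
  unfold bb; positivity

lemma kernel_rep {γ : ℝ} (hγ : 0 < γ) {a : ℝ} (ha : 0 ≤ a) {r : ℝ} (hr : 0 < r) :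
    ∫⁻ w, ENNReal.ofReal (rexp (-bb a w * r ^ 2)) ∂(mu γ) = ENNReal.ofReal (rexp (-(a * r)) * r ^ (-γ)) := by
  have e : ∀ w : ℝ × ℝ, ENNReal.ofReal (rexp (-bb a w * r ^ 2)) =
      ENNReal.ofReal (rexp (-(r ^ 2 * w.1))) * ENNReal.ofReal (rexp (-((a * r) ^ 2 / (4 * w.2 ^ 2)))) := by
    intro w
    rw [← ENNReal.ofReal_mul (by positivity), ← exp_add]
    congr 2
    unfold bb; ring
  simp_rw [e]
  unfold mu
  rw [lintegral_prod_mul (f := fun t => ENNReal.ofReal (rexp (-(r ^ 2 * t)))) (g := fun v => ENNReal.ofReal (rexp (-((a * r) ^ 2 / (4 * v ^ 2))))) (by fun_prop) (by fun_prop), lintegral_mu2 (by fun_prop), subord (by positivity), lintegral_mu1 _ (by fun_prop)]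
  have hG : 0 < Real.Gamma (γ / 2) := Real.Gamma_pos_of_pos (by positivity)
  have h := Real.integral_rpow_mul_exp_neg_mul_Ioi (a := γ / 2) (r := r ^ 2) (by positivity) (by positivity)
  have e2 : ∀ t ∈ Set.Ioi (0:ℝ), ENNReal.ofReal (t ^ (γ / 2 - 1) / Real.Gamma (γ / 2)) * ENNReal.ofReal (rexp (-(r ^ 2 * t))) = ENNReal.ofReal ((Real.Gamma (γ / 2))⁻¹ * (t ^ (γ / 2 - 1) * rexp (-(r ^ 2 * t)))) := by
    intro t ht
    have ht' : (0:ℝ) < t := ht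
    rw [← ENNReal.ofReal_mul (by positivity)]
    congr 1; ring
  rw [setLIntegral_congr_fun measurableSet_Ioi e2, ← ofReal_integral_eq_lintegral_ofReal, integral_const_mul, h, ← ENNReal.ofReal_mul (by positivity)]
  · congr 1
    have : (1 / r ^ 2) ^ (γ / 2) = r ^ (-γ) := by
      rw [one_div, ← Real.rpow_natCast, ← Real.rpow_neg hr.le, ← Real.rpow_mul hr.le]
      congr 1; push_cast; ring
    rw [this]; field_simp
  · apply Integrable.const_mul
    by_contra hni
    rw [integral_undef hni] at h
    have : 0 < (1 / r ^ 2) ^ (γ / 2) * Real.Gamma (γ / 2) := by positivity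
    linarith
  · filter_upwards [ae_restrict_mem measurableSet_Ioi] with t ht
    have ht' : (0:ℝ) < t := ht
    simp only [Pi.zero_apply]
    positivity

/-- Fourier transform of the Gaussian `exp (-b r²)` in dimension `d` (radial profile). -/
noncomputable def gh (d : ℕ) (b r : ℝ) : ℝ := (π / b) ^ ((d : ℝ) / 2) * rexp (-π ^ 2 * r ^ 2 / b)

lemma gh_le1 (d : ℕ) {b r t : ℝ} (ht : 0 < t) (hb : t ≤ b) : gh d b r ≤ π ^ ((d:ℝ)/2) * t ^ (-((d:ℝ)/2)) := by
  unfold gh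
  have hb0 : 0 < b := ht.trans_le hb
  have h1 : rexp (-π ^ 2 * r ^ 2 / b) ≤ 1 := by
    apply Real.exp_le_one_iff.2
    have : 0 ≤ π ^ 2 * r ^ 2 / b := by positivity
    rw [neg_mul, neg_div]; linarith
  calc _ ≤ (π / b) ^ ((d : ℝ) / 2) * 1 := by gcongr
    _ ≤ (π / t) ^ ((d : ℝ) / 2) := by rw [mul_one]; gcongr
    _ = _ := by rw [div_eq_mul_inv, Real.mul_rpow (by positivity) (by positivity), Real.rpow_neg ht.le, Real.inv_rpow ht.le]

lemma gh_le2 (d : ℕ) (hd : 1 ≤ d) {b r : ℝ} (hb : 0 < b) (hr : 0 < r) :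
    gh d b r ≤ (d:ℝ) ^ ((d:ℝ)/2) * (r ^ (-(d:ℝ))) := by
  unfold gh
  have hd' : (0:ℝ) < d := by exact_mod_cast hd
  have hπ : 1 ≤ π := by linarith [pi_gt_three]
  set z := π * r ^ 2 / b with hz
  have hz0 : 0 < z := by positivity
  have h1 : z ≤ d * rexp (z / d) := by
    have := Real.add_one_le_exp (z / d)
    have h2 : z / d ≤ rexp (z / d) := by linarith
    calc z = d * (z / d) := by field_simp
      _ ≤ _ := by gcongr
  have h2 : z ^ ((d:ℝ)/2) ≤ (d:ℝ) ^ ((d:ℝ)/2) * rexp (z / 2) := by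
    calc z ^ ((d:ℝ)/2) ≤ (d * rexp (z / d)) ^ ((d:ℝ)/2) := by gcongr
      _ = _ := by
        rw [Real.mul_rpow (by positivity) (by positivity), ← Real.exp_mul]
        congr 2; field_simp
  have h3 : (π / b) ^ ((d : ℝ) / 2) = z ^ ((d:ℝ)/2) * r ^ (-(d:ℝ)) := by
    have : π / b = z * (r ^ (-(2:ℝ))) := by
      rw [hz, Real.rpow_neg hr.le, Real.rpow_two]; field_simp
    rw [this, Real.mul_rpow (by positivity) (by positivity), ← Real.rpow_mul hr.le]
    congr 2; ring
  have h4 : rexp (-π ^ 2 * r ^ 2 / b) ≤ rexp (-(z/2)) := by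
    apply Real.exp_le_exp.2
    have : -π ^ 2 * r ^ 2 / b = -(π * z) := by rw [hz]; ring
    rw [this]; nlinarith
  calc _ ≤ ((d:ℝ) ^ ((d:ℝ)/2) * rexp (z / 2)) * r ^ (-(d:ℝ)) * rexp (-(z/2)) := by
        rw [h3]; gcongr
    _ = (d:ℝ) ^ ((d:ℝ)/2) * r ^ (-(d:ℝ)) * (rexp (z / 2) * rexp (-(z/2))) := by ring
    _ = _ := by rw [← exp_add]; simp

lemma measurable_gh (d : ℕ) (a : ℝ) : Measurable fun q : (ℝ × ℝ) × ℝ => gh d (bb a q.1) q.2 := by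
  unfold gh bb; fun_prop

lemma fourier_kernel_bound (d : ℕ) (hd : 1 ≤ d) {γ : ℝ} (hγ : 0 < γ) (hγd : γ < d) :
    ∃ C : ℝ, 0 < C ∧ ∀ a : ℝ, 0 ≤ a → ∀ r : ℝ, 0 < r →
      ∫⁻ w, ENNReal.ofReal (gh d (bb a w) r) ∂(mu γ) ≤ ENNReal.ofReal (C * r ^ (γ - d)) := by
  have hd' : (0:ℝ) < d := by exact_mod_cast hd
  have hG : 0 < Real.Gamma (γ / 2) := Real.Gamma_pos_of_pos (by positivity)
  set G := Real.Gamma (γ / 2) with hGdef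
  set C1 := (d:ℝ) ^ ((d:ℝ)/2) with hC1
  set C2 := π ^ ((d:ℝ)/2) with hC2
  have hC1p : 0 < C1 := by positivity
  have hC2p : 0 < C2 := by positivity
  have hdg : 0 < (d:ℝ) - γ := by linarith
  refine ⟨C1 / G * (2 / γ) + C2 / G * (2 / (d - γ)), by positivity, ?_⟩
  intro a ha r hr
  set m : ℝ → ℝ≥0∞ := fun t => if t ≤ r ^ 2 then ENNReal.ofReal (C1 * r ^ (-(d:ℝ))) else
      ENNReal.ofReal (C2 * t ^ (-((d:ℝ)/2))) with hm
  have hmm : Measurable m := by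
    apply Measurable.ite measurableSet_Iic <;> fun_prop
  have step1 : ∫⁻ w, ENNReal.ofReal (gh d (bb a w) r) ∂(mu γ) ≤ ∫⁻ w, m w.1 * 1 ∂(mu γ) := by
    apply lintegral_mono_ae
    have : ∀ᵐ w ∂(mu γ), 0 < w.1 := Measure.quasiMeasurePreserving_fst.ae (ae_mu1 γ)
    filter_upwards [this] with w hw
    have hle : w.1 ≤ bb a w := by
      unfold bb
      have : 0 ≤ a ^ 2 / (4 * w.2 ^ 2) := by positivity
      linarith
    simp only [hm, mul_one]
    split_ifs with h
    · exact ENNReal.ofReal_le_ofReal (gh_le2 d hd (hw.trans_le hle) hr)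
    · exact ENNReal.ofReal_le_ofReal (gh_le1 d hw hle)
  refine step1.trans ?_
  unfold mu
  rw [lintegral_prod_mul (f := m) (g := fun _ => 1) hmm.aemeasurable aemeasurable_const, lintegral_one, mu2_univ, mul_one, lintegral_mu1 _ hmm]
  have hr2 : 0 < r ^ 2 := by positivity
  have hsplit : Set.Ioi (0:ℝ) = Set.Ioc 0 (r^2) ∪ Set.Ioi (r^2) := (Set.Ioc_union_Ioi_eq_Ioi hr2.le).symm
  rw [hsplit, lintegral_union measurableSet_Ioi (Set.disjoint_left.2 fun x hx hx' => not_lt.2 hx.2 hx')]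
  have hrp : ∀ s : ℝ, (r ^ 2) ^ s = r ^ (2 * s) := by
    intro s; rw [← Real.rpow_natCast, ← Real.rpow_mul hr.le]; norm_num
  have i1 : ∫⁻ t in Set.Ioc 0 (r^2), ENNReal.ofReal (t ^ (γ / 2 - 1) / G) * m t = ENNReal.ofReal (C1 / G * (2 / γ) * r ^ (γ - d)) := by
    have e : ∀ t ∈ Set.Ioc 0 (r^2), ENNReal.ofReal (t ^ (γ / 2 - 1) / G) * m t = ENNReal.ofReal ((C1 / G * r ^ (-(d:ℝ))) * t ^ (γ / 2 - 1)) := by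
      intro t ht
      have ht0 : 0 < t := ht.1
      simp only [hm, if_pos ht.2]
      rw [← ENNReal.ofReal_mul (by positivity)]
      congr 1; ring
    rw [setLIntegral_congr_fun measurableSet_Ioc e, ← ofReal_integral_eq_lintegral_ofReal, integral_const_mul, ← intervalIntegral.integral_of_le hr2.le, integral_rpow (Or.inl (by linarith))]
    · congr 1
      rw [Real.zero_rpow (by linarith), hrp, sub_zero]
      have : r ^ (γ - d) = r ^ (-(d:ℝ)) * r ^ (2 * (γ / 2 - 1 + 1)) := by
        rw [← Real.rpow_add hr]; congr 1; ring
      rw [this]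
      have : γ / 2 - 1 + 1 = γ / 2 := by ring
      rw [this]
      field_simp
    · apply Integrable.const_mul
      exact (intervalIntegrable_iff_integrableOn_Ioc_of_le hr2.le).1 (intervalIntegral.intervalIntegrable_rpow' (by linarith))
    · filter_upwards [ae_restrict_mem measurableSet_Ioc] with t ht
      have ht' : (0:ℝ) < t := ht.1
      simp only [Pi.zero_apply]
      positivity
  have i2 : ∫⁻ t in Set.Ioi (r^2), ENNReal.ofReal (t ^ (γ / 2 - 1) / G) * m t = ENNReal.ofReal (C2 / G * (2 / (d - γ)) * r ^ (γ - d)) := by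
    have hlt : γ / 2 - 1 - d / 2 < -1 := by linarith
    have e : ∀ t ∈ Set.Ioi (r^2), ENNReal.ofReal (t ^ (γ / 2 - 1) / G) * m t = ENNReal.ofReal ((C2 / G) * t ^ (γ / 2 - 1 - d / 2)) := by
      intro t ht
      have ht0 : 0 < t := hr2.trans ht
      simp only [hm, if_neg (not_le.2 (Set.mem_Ioi.1 ht))]
      rw [← ENNReal.ofReal_mul (by positivity)]
      congr 1
      rw [sub_eq_add_neg _ ((d:ℝ)/2), Real.rpow_add ht0]
      ring
    rw [setLIntegral_congr_fun measurableSet_Ioi e, ← ofReal_integral_eq_lintegral_ofReal, integral_const_mul, integral_Ioi_rpow_of_lt hlt hr2]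
    · congr 1
      rw [hrp]
      have : r ^ (γ - d) = r ^ (2 * (γ / 2 - 1 - d / 2 + 1)) := by
        congr 1; ring
      rw [this]
      have h1 : γ / 2 - 1 - d / 2 + 1 = - ((d - γ) / 2) := by ring
      rw [h1, neg_div_neg_eq]
      field_simp
    · exact (integrableOn_Ioi_rpow_of_lt hlt hr2).const_mul _
    · filter_upwards [ae_restrict_mem measurableSet_Ioi] with t ht
      have ht' : (0:ℝ) < t := hr2.trans ht
      simp only [Pi.zero_apply]
      positivity
  rw [i1, i2, ← ENNReal.ofReal_add (by positivity) (by positivity), add_mul]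


section young
variable {V : Type*} [NormedAddCommGroup V] [InnerProductSpace ℝ V] [FiniteDimensional ℝ V]
  [MeasurableSpace V] [BorelSpace V]

lemma young_one {A g : V → ℝ≥0∞} (hA : AEMeasurable A) (hg : Measurable g) {s : ℝ} (hs : 1 ≤ s) :
    ∫⁻ ξ, (∫⁻ η, A η * g (ξ - η)) ^ s ≤ (∫⁻ η, A η) ^ s * ∫⁻ ξ, g ξ ^ s := by
  have hs0 : 0 < s := by linarith
  have key : ∀ ξ, (∫⁻ η, A η * g (ξ - η)) ^ s ≤ (∫⁻ η, A η) ^ (s - 1) * ∫⁻ η, A η * g (ξ - η) ^ s := by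
    intro ξ
    have h1 : ∫⁻ η, A η * g (ξ - η) = ∫⁻ η, A η ^ (1 - 1 / s) * (A η * g (ξ - η) ^ s) ^ (1 / s) := by
      congr 1; ext η
      rw [ENNReal.mul_rpow_of_nonneg _ _ (by positivity), ← ENNReal.rpow_mul, mul_one_div_cancel hs0.ne',
        ENNReal.rpow_one, ← mul_assoc, ← ENNReal.rpow_add_of_nonneg _ _ _ (by positivity)]
      · simp
      · rw [sub_nonneg, div_le_one hs0]; exact hs
    have h2 := ENNReal.lintegral_mul_norm_pow_le (μ := (volume : Measure V)) (f := A) (g := fun η => A η * g (ξ - η) ^ s) hA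
      (hA.mul ((hg.comp (measurable_const.sub measurable_id)).pow_const s).aemeasurable) (p := 1 - 1 / s) (q := 1 / s)
      (by rw [sub_nonneg, div_le_one hs0]; exact hs) (by positivity) (by ring)
    rw [← h1] at h2
    calc _ ≤ ((∫⁻ η, A η) ^ (1 - 1 / s) * (∫⁻ η, A η * g (ξ - η) ^ s) ^ (1 / s)) ^ s := by gcongr
      _ = _ := by
        rw [ENNReal.mul_rpow_of_nonneg _ _ hs0.le, ← ENNReal.rpow_mul, ← ENNReal.rpow_mul, one_div_mul_cancel hs0.ne',
          ENNReal.rpow_one]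
        congr 2; field_simp
  calc _ ≤ ∫⁻ ξ, (∫⁻ η, A η) ^ (s - 1) * ∫⁻ η, A η * g (ξ - η) ^ s := lintegral_mono key
    _ ≤ (∫⁻ η, A η) ^ (s - 1) * ∫⁻ ξ, ∫⁻ η, A η * g (ξ - η) ^ s := by
        rw [lintegral_const_mul'']
        apply AEMeasurable.lintegral_prod_right' (f := fun q : V × V => A q.2 * g (q.1 - q.2) ^ s)
        exact (hA.comp_quasiMeasurePreserving Measure.quasiMeasurePreserving_snd).mul (by fun_prop)
    _ = (∫⁻ η, A η) ^ (s - 1) * ∫⁻ η, ∫⁻ ξ, A η * g (ξ - η) ^ s := by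
        rw [lintegral_lintegral_swap]
        exact (hA.comp_quasiMeasurePreserving Measure.quasiMeasurePreserving_snd).mul (by fun_prop)
    _ = (∫⁻ η, A η) ^ (s - 1) * ((∫⁻ η, A η) * ∫⁻ ξ, g ξ ^ s) := by
        congr 1
        rw [← lintegral_mul_const'' _ hA]
        congr 1; ext η
        rw [lintegral_const_mul _ (by fun_prop), lintegral_sub_right_eq_self (fun ξ => g ξ ^ s)]
    _ = _ := by
        rw [← mul_assoc]
        congr 1
        nth_rewrite 2 [← ENNReal.rpow_one (∫⁻ η, A η)]
        rw [← ENNReal.rpow_add_of_nonneg _ _ (by linarith) zero_le_one]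
        simp

lemma young_three {U g₁ g₂ : V → ℝ≥0∞} (hU : Measurable U) (h₁ : Measurable g₁) (h₂ : Measurable g₂)
    {s θ : ℝ} (hs : 1 ≤ s) (hθ : θ = 1 - 1 / s) (hθ2 : θ ≤ 1 / 2) :
    ∫⁻ ξ, U ξ ^ (2 * θ) * ∫⁻ η, g₁ η * g₂ (η - ξ) ≤
      (∫⁻ ξ, U ξ) ^ (2 * θ) * (∫⁻ ξ, g₁ ξ ^ s) ^ (1 / s) * (∫⁻ ξ, g₂ ξ ^ s) ^ (1 / s) := by
  have hs0 : 0 < s := by linarith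
  have hθ0 : 0 ≤ θ := by rw [hθ, sub_nonneg, div_le_one hs0]; exact hs
  have hss : s * (1 - θ) = 1 := by rw [hθ]; field_simp; ring
  have h1s : 1 / s = 1 - θ := by rw [hθ]; ring
  have h12 : 0 ≤ 1 - 2 * θ := by linarith
  set F : Fin 3 → V × V → ℝ≥0∞ := ![fun q => U q.1 * g₁ q.2 ^ s, fun q => U q.1 * g₂ (q.2 - q.1) ^ s,
    fun q => g₁ q.2 ^ s * g₂ (q.2 - q.1) ^ s] with hF
  set e : Fin 3 → ℝ := ![θ, θ, 1 - 2 * θ] with he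
  have hol := ENNReal.lintegral_prod_norm_pow_le (μ := (volume : Measure V).prod (volume : Measure V)) Finset.univ (f := F)
    (by intro i _; fin_cases i <;> simp [hF] <;> fun_prop) (p := e) (by simp [he, Fin.sum_univ_three]; ring)
    (by intro i _; fin_cases i <;> simp [he] <;> linarith)
  simp only [Fin.prod_univ_three, hF, he, Matrix.cons_val_zero, Matrix.cons_val_one, Matrix.cons_val] at hol
  have hm1 : ∀ x : ℝ≥0∞, x ^ (s * θ) * x ^ (s * (1 - 2 * θ)) = x := by
    intro x
    rw [← ENNReal.rpow_add_of_nonneg _ _ (by positivity) (by positivity)]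
    have : s * θ + s * (1 - 2 * θ) = 1 := by linarith
    rw [this, ENNReal.rpow_one]
  have hm2 : ∀ x : ℝ≥0∞, x ^ θ * x ^ θ = x ^ (2 * θ) := by
    intro x
    rw [← ENNReal.rpow_add_of_nonneg _ _ (by positivity) (by positivity)]
    congr 1; ring
  have hm3 : ∀ x : ℝ≥0∞, x ^ θ * x ^ (1 - 2 * θ) = x ^ (1 - θ) := by
    intro x
    rw [← ENNReal.rpow_add_of_nonneg _ _ (by positivity) (by positivity)]
    congr 1; ring
  have hL : ∫⁻ ξ, U ξ ^ (2 * θ) * ∫⁻ η, g₁ η * g₂ (η - ξ) =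
      ∫⁻ q, (U q.1 * g₁ q.2 ^ s) ^ θ * (U q.1 * g₂ (q.2 - q.1) ^ s) ^ θ *
        (g₁ q.2 ^ s * g₂ (q.2 - q.1) ^ s) ^ (1 - 2 * θ) ∂((volume : Measure V).prod (volume : Measure V)) := by
    rw [lintegral_prod _ (by fun_prop)]
    congr 1; ext ξ
    rw [← lintegral_const_mul _ (by fun_prop)]
    congr 1; ext η
    simp only
    simp only [ENNReal.mul_rpow_of_nonneg _ _ hθ0, ENNReal.mul_rpow_of_nonneg _ _ h12, ← ENNReal.rpow_mul]
    conv_lhs => rw [← hm1 (g₁ η), ← hm1 (g₂ (η - ξ)), ← hm2]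
    ring
  have j1 : ∫⁻ q : V × V, U q.1 * g₁ q.2 ^ s ∂((volume : Measure V).prod (volume : Measure V)) = (∫⁻ ξ, U ξ) * ∫⁻ ξ, g₁ ξ ^ s :=
    lintegral_prod_mul hU.aemeasurable (h₁.pow_const s).aemeasurable
  have j2 : ∫⁻ q : V × V, U q.1 * g₂ (q.2 - q.1) ^ s ∂((volume : Measure V).prod (volume : Measure V)) = (∫⁻ ξ, U ξ) * ∫⁻ ξ, g₂ ξ ^ s := by
    rw [lintegral_prod _ (by fun_prop), ← lintegral_mul_const _ hU]
    congr 1; ext ξ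
    simp only
    rw [lintegral_const_mul _ (by fun_prop), lintegral_sub_right_eq_self (fun η => g₂ η ^ s)]
  have j3 : ∫⁻ q : V × V, g₁ q.2 ^ s * g₂ (q.2 - q.1) ^ s ∂((volume : Measure V).prod (volume : Measure V)) = (∫⁻ ξ, g₁ ξ ^ s) * ∫⁻ ξ, g₂ ξ ^ s := by
    rw [lintegral_prod_symm _ (by fun_prop), ← lintegral_mul_const _ (by fun_prop)]
    congr 1; ext ξ
    simp only
    rw [lintegral_const_mul _ (by fun_prop), lintegral_sub_left_eq_self (fun η => g₂ η ^ s)]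
  rw [j1, j2, j3, ← hL] at hol
  refine hol.trans (le_of_eq ?_)
  simp only [ENNReal.mul_rpow_of_nonneg _ _ hθ0, ENNReal.mul_rpow_of_nonneg _ _ h12, h1s, ← hm2, ← hm3]
  ring

end young

section fourier
variable {V : Type*} [NormedAddCommGroup V] [InnerProductSpace ℝ V] [FiniteDimensional ℝ V]
  [MeasurableSpace V] [BorelSpace V]

lemma norm_ch (x : ℝ) : ‖Complex.exp ((x : ℂ) * Complex.I)‖ = 1 := Complex.norm_exp_ofReal_mul_I x

lemma fourier_mul {A f : V → ℂ} (hA : Integrable A) (hf : Integrable f) (ξ : V) :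
    𝓕 (fun x => 𝓕⁻ A x * f x) ξ = ∫ η, A η * 𝓕 f (ξ - η) := by
  simp only [Real.fourier_eq', Real.fourierInv_eq', smul_eq_mul]
  have : ∀ x, Complex.exp (↑(-2 * π * inner ℝ x ξ) * Complex.I) * ((∫ η, Complex.exp (↑(2 * π * inner ℝ η x) * Complex.I) * A η) * f x)
      = ∫ η, Complex.exp (↑(-2 * π * inner ℝ x ξ) * Complex.I) * (Complex.exp (↑(2 * π * inner ℝ η x) * Complex.I) * A η * f x) := by
    intro x
    rw [integral_const_mul, integral_mul_const]
  simp_rw [this]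
  rw [integral_integral_swap]
  · congr 1; ext η
    rw [← integral_const_mul]
    congr 1; ext x
    have : Complex.exp (↑(-2 * π * inner ℝ x (ξ - η)) * Complex.I) =
      Complex.exp (↑(-2 * π * inner ℝ x ξ) * Complex.I) * Complex.exp (↑(2 * π * inner ℝ η x) * Complex.I) := by
      rw [← Complex.exp_add, inner_sub_right, real_inner_comm x η]
      congr 1; push_cast; ring
    rw [this]; ring
  · have h := hf.mul_prod hA
    refine (h.bdd_mul (c := 1) (f := fun q : V × V => Complex.exp (↑(-2 * π * inner ℝ q.1 ξ) * Complex.I) * Complex.exp (↑(2 * π * inner ℝ q.2 q.1) * Complex.I)) ?_ ?_).congr ?_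
    · apply Continuous.aestronglyMeasurable; fun_prop
    · refine Filter.Eventually.of_forall fun q => ?_
      rw [norm_mul, norm_ch, norm_ch]; norm_num
    · refine Filter.Eventually.of_forall fun q => ?_
      simp only [Function.uncurry]; ring

lemma fourier_conj (f : V → ℂ) (ζ : V) :
    𝓕 (fun x => (starRingEnd ℂ) (f x)) ζ = (starRingEnd ℂ) (𝓕 f (-ζ)) := by
  simp only [Real.fourier_eq', smul_eq_mul]
  rw [← integral_conj]
  congr 1; ext x
  rw [map_mul, ← Complex.exp_conj]
  congr 2
  simp
  exact Or.inl (map_ofNat _ 2).symm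

lemma enorm_fourier_le (f : V → ℂ) (ξ : V) : ‖𝓕 f ξ‖ₑ ≤ ∫⁻ x, ‖f x‖ₑ := by
  rw [Real.fourier_eq']
  refine (enorm_integral_le_lintegral_enorm _).trans (le_of_eq ?_)
  congr 1; ext x
  rw [enorm_smul]
  have : ‖Complex.exp (↑(-2 * π * inner ℝ x ξ) * Complex.I)‖ₑ = 1 := by
    rw [← ofReal_norm, norm_ch]; simp
  rw [this, one_mul]

lemma enorm_fourierInv_le (f : V → ℂ) (ξ : V) : ‖𝓕⁻ f ξ‖ₑ ≤ ∫⁻ x, ‖f x‖ₑ := by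
  rw [Real.fourierInv_eq']
  refine (enorm_integral_le_lintegral_enorm _).trans (le_of_eq ?_)
  congr 1; ext x
  rw [enorm_smul]
  have : ‖Complex.exp (↑(2 * π * inner ℝ x ξ) * Complex.I)‖ₑ = 1 := by
    rw [← ofReal_norm, norm_ch]; simp
  rw [this, one_mul]

lemma inversion (F : SchwartzMap V ℂ) : 𝓕⁻ (𝓕 (F : V → ℂ)) = F := by
  apply Continuous.fourierInv_fourier_eq F.continuous F.integrable
  rw [← SchwartzMap.fourier_coe]; exact (𝓕 F).integrable

/-- the product `f * conj g` as a Schwartz function -/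
noncomputable def prodConj (f g : SchwartzMap V ℂ) : SchwartzMap V ℂ :=
  SchwartzMap.pairing (ContinuousLinearMap.mul ℝ ℂ) f
    (SchwartzMap.postcompCLM (𝕜 := ℝ) (Complex.conjCLE : ℂ →L[ℝ] ℂ) g)

lemma prodConj_apply (f g : SchwartzMap V ℂ) (x : V) : prodConj f g x = f x * (starRingEnd ℂ) (g x) := by
  simp [prodConj, SchwartzMap.pairing_apply_apply]

lemma fourier_prodConj_le (f g : SchwartzMap V ℂ) (ξ : V) :
    ‖𝓕 (prodConj f g : V → ℂ) ξ‖ₑ ≤ ∫⁻ η, ‖𝓕 (f : V → ℂ) η‖ₑ * ‖𝓕 (g : V → ℂ) (η - ξ)‖ₑ := by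
  have h1 : (prodConj f g : V → ℂ) = fun x => 𝓕⁻ (𝓕 (f : V → ℂ)) x * (starRingEnd ℂ) (g x) := by
    ext x; rw [prodConj_apply, inversion]
  rw [h1, fourier_mul]
  · refine (enorm_integral_le_lintegral_enorm _).trans (le_of_eq ?_)
    congr 1; ext η
    rw [enorm_mul, fourier_conj, RCLike.enorm_conj, neg_sub]
  · rw [← SchwartzMap.fourier_coe]; exact (𝓕 f).integrable
  · exact (SchwartzMap.postcompCLM (𝕜 := ℝ) (Complex.conjCLE : ℂ →L[ℝ] ℂ) g).integrable

end fourier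
section kernel
variable {d : ℕ}

lemma gauss_conv {b : ℝ} (hb : 0 < b) (F : SchwartzMap (EuclideanSpace ℝ (Fin d)) ℂ) (x : EuclideanSpace ℝ (Fin d)) :
    ∫ y, ((rexp (-b * ‖y‖ ^ 2) : ℝ) : ℂ) * F (x - y) =
      ∫ ξ, ((gh d b ‖ξ‖ : ℝ) : ℂ) * (Complex.exp (↑(2 * π * inner ℝ ξ x) * Complex.I) * 𝓕 (F : EuclideanSpace ℝ (Fin d) → ℂ) ξ) := by
  have hFi : Integrable (𝓕 (F : EuclideanSpace ℝ (Fin d) → ℂ)) := by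
    rw [← SchwartzMap.fourier_coe]; exact (𝓕 F).integrable
  have hG : Integrable (fun y : EuclideanSpace ℝ (Fin d) => ((rexp (-b * ‖y‖ ^ 2) : ℝ) : ℂ)) := by
    have := GaussianFourier.integrable_cexp_neg_mul_sq_norm_add (b := (b : ℂ)) (by simpa using hb) 0 (0 : EuclideanSpace ℝ (Fin d))
    refine this.congr (Filter.Eventually.of_forall fun y => ?_)
    simp
  have h1 : ∀ y, F (x - y) = ∫ ξ, Complex.exp (↑(2 * π * inner ℝ ξ (x - y)) * Complex.I) * 𝓕 (F : EuclideanSpace ℝ (Fin d) → ℂ) ξ := by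
    intro y
    conv_lhs => rw [← inversion F]
    rw [Real.fourierInv_eq']; rfl
  simp_rw [h1, ← integral_const_mul]
  rw [integral_integral_swap]
  · congr 1; ext ξ
    have h2 := fourier_gaussian_innerProductSpace (b := (b : ℂ)) (by simpa using hb) ξ
    rw [Real.fourier_eq'] at h2
    have h3 : ((gh d b ‖ξ‖ : ℝ) : ℂ) = (π / b) ^ (Module.finrank ℝ (EuclideanSpace ℝ (Fin d)) / 2 : ℂ) * Complex.exp (-π ^ 2 * ‖ξ‖ ^ 2 / b) := by
      unfold gh
      push_cast [Complex.ofReal_cpow (show 0 ≤ π / b by positivity)]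
      simp
    rw [h3, ← h2, ← integral_mul_const]
    congr 1; ext y
    have : Complex.exp (↑(2 * π * inner ℝ ξ (x - y)) * Complex.I) =
      Complex.exp (↑(-2 * π * inner ℝ y ξ) * Complex.I) * Complex.exp (↑(2 * π * inner ℝ ξ x) * Complex.I) := by
      rw [← Complex.exp_add, inner_sub_right, real_inner_comm y ξ]
      congr 1; push_cast; ring
    rw [this, smul_eq_mul]
    push_cast; ring
  · have h := hG.mul_prod hFi
    refine (h.bdd_mul (c := 1) (f := fun q : EuclideanSpace ℝ (Fin d) × EuclideanSpace ℝ (Fin d) => Complex.exp (↑(2 * π * inner ℝ q.2 (x - q.1)) * Complex.I)) ?_ ?_).congr ?_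
    · apply Continuous.aestronglyMeasurable; fun_prop
    · exact Filter.Eventually.of_forall fun q => (norm_ch _).le
    · refine Filter.Eventually.of_forall fun q => ?_
      simp only [Function.uncurry]; ring

lemma sing_ball (hd : 1 ≤ d) {s : ℝ} (hsd : s < d) :
    ∫⁻ y in Metric.closedBall (0 : EuclideanSpace ℝ (Fin d)) 1, ENNReal.ofReal (‖y‖ ^ (-s)) < ∞ := by
  have : Nonempty (Fin d) := ⟨⟨0, hd⟩⟩
  have h := (integrable_fun_norm_addHaar (volume : Measure (EuclideanSpace ℝ (Fin d)))
    (f := (Set.Iic (1:ℝ)).indicator fun r => r ^ (-s))).2 (by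
      have : IntegrableOn (fun r : ℝ => r ^ ((d:ℝ) - 1 - s)) (Set.Ioc 0 1) :=
        (intervalIntegrable_iff_integrableOn_Ioc_of_le zero_le_one).1 (intervalIntegral.intervalIntegrable_rpow' (by linarith))
      have h2 : IntegrableOn ((Set.Iic (1:ℝ)).indicator fun r : ℝ => r ^ ((d:ℝ) - 1 - s)) (Set.Ioi 0) := by
        rw [IntegrableOn, integrable_indicator_iff measurableSet_Iic, IntegrableOn, Measure.restrict_restrict measurableSet_Iic,
          Set.inter_comm, Set.Ioi_inter_Iic]
        exact this
      refine h2.congr_fun ?_ measurableSet_Ioi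
      intro r hr
      have hr' : (0:ℝ) < r := hr
      simp only [Set.indicator, finrank_euclideanSpace, Fintype.card_fin, smul_eq_mul]
      split_ifs
      · rw [← Real.rpow_natCast, ← Real.rpow_add hr', Nat.cast_sub hd]
        congr 1; push_cast; ring
      · simp)
  have h3 : Integrable ((Metric.closedBall (0 : EuclideanSpace ℝ (Fin d)) 1).indicator fun y => ‖y‖ ^ (-s)) := by
    refine h.congr (Filter.Eventually.of_forall fun y => ?_)
    simp [Set.indicator]
  rw [integrable_indicator_iff measurableSet_closedBall] at h3
  have h4 := h3.2
  rw [hasFiniteIntegral_iff_ofReal (Filter.Eventually.of_forall fun y => by positivity)] at h4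
  exact h4

lemma sing_out {N : ℝ} (hN : d < N) :
    ∫⁻ y in (Metric.closedBall (0 : EuclideanSpace ℝ (Fin d)) 1)ᶜ, ENNReal.ofReal (‖y‖ ^ (-N)) < ∞ := by
  have hN0 : 0 < N := lt_of_le_of_lt (Nat.cast_nonneg d) hN
  have h := (integrable_one_add_norm (E := EuclideanSpace ℝ (Fin d)) (μ := volume) (r := N) (by simpa using hN)).const_mul (2 ^ N)
  have h4 := h.2
  rw [hasFiniteIntegral_iff_ofReal (Filter.Eventually.of_forall fun y => by positivity)] at h4
  refine lt_of_le_of_lt (le_trans ?_ (setLIntegral_le_lintegral ((Metric.closedBall (0 : EuclideanSpace ℝ (Fin d)) 1)ᶜ) _)) h4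
  refine setLIntegral_mono' measurableSet_closedBall.compl ?_
  intro y hy
  have hy1 : 1 < ‖y‖ := by simpa using hy
  have hy0 : 0 < ‖y‖ := by linarith
  apply ENNReal.ofReal_le_ofReal
  have : (2 * ‖y‖) ^ (-N) ≤ (1 + ‖y‖) ^ (-N) :=
    Real.rpow_le_rpow_of_nonpos (by positivity) (by linarith) (by linarith)
  rw [Real.mul_rpow (by norm_num) hy0.le, Real.rpow_neg (by norm_num)] at this
  have h2 : (0:ℝ) < 2 ^ N := by positivity
  calc ‖y‖ ^ (-N) = 2 ^ N * (((2:ℝ) ^ N)⁻¹ * ‖y‖ ^ (-N)) := by field_simp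
    _ ≤ _ := by gcongr

lemma sing_fin (hd : 1 ≤ d) {s : ℝ} (hs : 0 < s) (hsd : s < d) 
    {g : EuclideanSpace ℝ (Fin d) → ℂ} (hg : Integrable g) {M : ℝ} (hM : ∀ y, ‖g y‖ ≤ M) :
    ∫⁻ y, ENNReal.ofReal (‖y‖ ^ (-s)) * ‖g y‖ₑ < ∞ := by
  rw [← lintegral_add_compl _ (measurableSet_closedBall (x := (0 : EuclideanSpace ℝ (Fin d))) (ε := 1))]
  refine ENNReal.add_lt_top.2 ⟨?_, ?_⟩
  · have : ∫⁻ y in Metric.closedBall (0 : EuclideanSpace ℝ (Fin d)) 1, ENNReal.ofReal (‖y‖ ^ (-s)) * ‖g y‖ₑ ≤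
      ∫⁻ y in Metric.closedBall (0 : EuclideanSpace ℝ (Fin d)) 1, ENNReal.ofReal (‖y‖ ^ (-s)) * ENNReal.ofReal M := by
      apply lintegral_mono
      intro y
      simp only
      gcongr
      rw [← ofReal_norm]
      exact ENNReal.ofReal_le_ofReal (hM y)
    refine this.trans_lt ?_
    rw [lintegral_mul_const _ (by fun_prop)]
    exact ENNReal.mul_lt_top (sing_ball hd hsd) ENNReal.ofReal_lt_top
  · have : ∫⁻ y in (Metric.closedBall (0 : EuclideanSpace ℝ (Fin d)) 1)ᶜ, ENNReal.ofReal (‖y‖ ^ (-s)) * ‖g y‖ₑ ≤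
      ∫⁻ y in (Metric.closedBall (0 : EuclideanSpace ℝ (Fin d)) 1)ᶜ, ‖g y‖ₑ := by
      refine setLIntegral_mono' measurableSet_closedBall.compl ?_
      intro y hy
      have hy1 : 1 < ‖y‖ := by simpa using hy
      have : ENNReal.ofReal (‖y‖ ^ (-s)) ≤ 1 := by
        rw [← ENNReal.ofReal_one]
        exact ENNReal.ofReal_le_ofReal (Real.rpow_le_one_of_one_le_of_nonpos hy1.le (by linarith))
      calc _ ≤ 1 * ‖g y‖ₑ := by gcongr
        _ = _ := one_mul _
    exact (this.trans (setLIntegral_le_lintegral _ _)).trans_lt hg.2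

/-- Fourier transform of the kernel. -/
noncomputable def Khat (d : ℕ) (a γ r : ℝ) : ℝ := ∫ w, gh d (bb a w) r ∂(mu γ)

lemma gh_nonneg {b r : ℝ} (hb : 0 < b) : 0 ≤ gh d b r := by unfold gh; positivity

lemma ae_ne_zero (hd : 1 ≤ d) : ∀ᵐ y : EuclideanSpace ℝ (Fin d), y ≠ 0 := by
  have : Nonempty (Fin d) := ⟨⟨0, hd⟩⟩
  exact Measure.ae_ne volume 0

lemma kernel_conv (hd : 1 ≤ d) {γ : ℝ} (hγ : 0 < γ) (hγd : γ < d) {a : ℝ} (ha : 0 ≤ a)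
    (F : SchwartzMap (EuclideanSpace ℝ (Fin d)) ℂ) (x : EuclideanSpace ℝ (Fin d)) :
    ∫ y : EuclideanSpace ℝ (Fin d), ((rexp (-(a * ‖y‖)) * ‖y‖ ^ (-γ) : ℝ) : ℂ) * F (x - y) =
      𝓕⁻ (fun ξ => ((Khat d a γ ‖ξ‖ : ℝ) : ℂ) * 𝓕 (F : EuclideanSpace ℝ (Fin d) → ℂ) ξ) x := by
  obtain ⟨C, hC, hCb⟩ := fourier_kernel_bound d hd hγ hγd
  have hFc : ⇑(𝓕 F : SchwartzMap (EuclideanSpace ℝ (Fin d)) ℂ) = 𝓕 (F : EuclideanSpace ℝ (Fin d) → ℂ) := SchwartzMap.fourier_coe F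
  have hbm := measurable_bb a
  have hghm := measurable_gh d a
  obtain ⟨M1, -, hM1⟩ := F.decay 0 0
  obtain ⟨M2, -, hM2⟩ := (𝓕 F).decay 0 0
  simp only [pow_zero, norm_iteratedFDeriv_zero, one_mul] at hM1 hM2
  -- step 1
  have s1 : ∀ᵐ y : EuclideanSpace ℝ (Fin d), ((rexp (-(a * ‖y‖)) * ‖y‖ ^ (-γ) : ℝ) : ℂ) * F (x - y) =
      ∫ w, ((rexp (-bb a w * ‖y‖ ^ 2) : ℝ) : ℂ) * F (x - y) ∂(mu γ) := by
    filter_upwards [ae_ne_zero hd] with y hy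
    have hy0 : 0 < ‖y‖ := norm_pos_iff.2 hy
    rw [integral_mul_const, integral_complex_ofReal, integral_eq_lintegral_of_nonneg_ae
      (Filter.Eventually.of_forall fun _ => (exp_pos _).le) (by fun_prop), kernel_rep hγ ha hy0, ENNReal.toReal_ofReal (by positivity)]
  rw [integral_congr_ae s1, integral_integral_swap]
  · -- step 2
    have s2 : ∀ᵐ w ∂(mu γ), ∫ y, ((rexp (-bb a w * ‖y‖ ^ 2) : ℝ) : ℂ) * F (x - y) =
      ∫ ξ, ((gh d (bb a w) ‖ξ‖ : ℝ) : ℂ) * (Complex.exp (↑(2 * π * inner ℝ ξ x) * Complex.I) * 𝓕 (F : EuclideanSpace ℝ (Fin d) → ℂ) ξ) := by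
      filter_upwards [bb_pos γ a] with w hw
      exact gauss_conv hw F x
    rw [integral_congr_ae s2, integral_integral_swap]
    · rw [Real.fourierInv_eq']
      congr 1; ext ξ
      rw [integral_mul_const, integral_complex_ofReal, smul_eq_mul, Khat]
      ring
    · have hms : AEStronglyMeasurable (Function.uncurry fun (w : ℝ × ℝ) (ξ : EuclideanSpace ℝ (Fin d)) => ((gh d (bb a w) ‖ξ‖ : ℝ) : ℂ) * (Complex.exp (↑(2 * π * inner ℝ ξ x) * Complex.I) * 𝓕 (F : EuclideanSpace ℝ (Fin d) → ℂ) ξ)) ((mu γ).prod volume) := by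
        rw [← hFc]
        apply Measurable.aestronglyMeasurable
        apply Measurable.mul
        · exact Complex.measurable_ofReal.comp (hghm.comp (measurable_fst.prodMk measurable_snd.norm))
        · exact Continuous.measurable (by have := (𝓕 F).continuous; fun_prop)
      refine ⟨hms, ?_⟩
      rw [HasFiniteIntegral, lintegral_prod_symm _ hms.enorm]
      refine lt_of_le_of_lt ?_ (ENNReal.mul_lt_top (ENNReal.ofReal_lt_top (r := C)) (sing_fin hd (s := d - γ) (by linarith) (by linarith) (𝓕 F).integrable (hM2)))
      rw [← lintegral_const_mul _ (by have := (𝓕 F).continuous.measurable; fun_prop)]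
      apply lintegral_mono_ae
      filter_upwards [ae_ne_zero hd] with ξ hξ
      have hξ0 : 0 < ‖ξ‖ := norm_pos_iff.2 hξ
      simp only [Function.uncurry, enorm_mul]
      have hone : ‖Complex.exp (↑(2 * π * inner ℝ ξ x) * Complex.I)‖ₑ = 1 := by
        rw [← ofReal_norm, norm_ch]; simp
      rw [hone, one_mul, lintegral_mul_const' _ _ (by simp), ← mul_assoc, hFc, ← ENNReal.ofReal_mul hC.le]
      gcongr
      refine le_trans (le_of_eq ?_) ((hCb a ha _ hξ0).trans (le_of_eq ?_))
      · apply lintegral_congr_ae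
        filter_upwards [bb_pos γ a] with w hw
        rw [← ofReal_norm, Complex.norm_real, Real.norm_of_nonneg (gh_nonneg hw)]
      · congr 3; ring
  · have hms : AEStronglyMeasurable (Function.uncurry fun (y : EuclideanSpace ℝ (Fin d)) (w : ℝ × ℝ) => ((rexp (-bb a w * ‖y‖ ^ 2) : ℝ) : ℂ) * F (x - y)) (volume.prod (mu γ)) := by
      apply Measurable.aestronglyMeasurable
      have := F.continuous.measurable
      change Measurable fun q : EuclideanSpace ℝ (Fin d) × (ℝ × ℝ) => ((rexp (-bb a q.2 * ‖q.1‖ ^ 2) : ℝ) : ℂ) * F (x - q.1)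
      fun_prop
    refine ⟨hms, ?_⟩
    rw [HasFiniteIntegral, lintegral_prod _ hms.enorm]
    refine lt_of_le_of_lt ?_ (sing_fin hd hγ hγd (F.integrable.comp_sub_left x) (fun y => hM1 (x - y)))
    apply lintegral_mono_ae
    filter_upwards [ae_ne_zero hd] with y hy
    have hy0 : 0 < ‖y‖ := norm_pos_iff.2 hy
    simp only [Function.uncurry, enorm_mul]
    rw [lintegral_mul_const' _ _ (by simp)]
    gcongr
    have : ∀ w, ‖((rexp (-bb a w * ‖y‖ ^ 2) : ℝ) : ℂ)‖ₑ = ENNReal.ofReal (rexp (-bb a w * ‖y‖ ^ 2)) := by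
      intro w
      rw [← ofReal_norm, Complex.norm_real, Real.norm_of_nonneg (exp_pos _).le]
    simp_rw [this]
    rw [kernel_rep hγ ha hy0]
    apply ENNReal.ofReal_le_ofReal
    have : rexp (-(a * ‖y‖)) ≤ 1 := by
      apply Real.exp_le_one_iff.2
      have : 0 ≤ a * ‖y‖ := by positivity
      linarith
    have h2 : 0 ≤ ‖y‖ ^ (-γ) := by positivity
    nlinarith

end kernel

section final
variable {d : ℕ}

lemma eLpNorm_eq_pow {p' : ℝ≥0∞} (h0 : p' ≠ 0) (ht : p' ≠ ∞) (u : EuclideanSpace ℝ (Fin d) → ℂ) :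
    eLpNorm u p' volume = (∫⁻ x, ‖u x‖ₑ ^ p'.toReal) ^ (1 / p'.toReal) :=
  eLpNorm_eq_lintegral_rpow_enorm_toReal h0 ht

lemma prodConj_L1 (f g : SchwartzMap (EuclideanSpace ℝ (Fin d)) ℂ) :
    ∫⁻ x, ‖prodConj f g x‖ₑ ≤ eLpNorm f 2 volume * eLpNorm g 2 volume := by
  have h := ENNReal.lintegral_mul_le_Lp_mul_Lq (volume : Measure (EuclideanSpace ℝ (Fin d))) Real.HolderConjugate.two_two
    (f := fun x => ‖f x‖ₑ) (g := fun x => ‖g x‖ₑ) f.continuous.enorm.aemeasurable g.continuous.enorm.aemeasurable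
  rw [eLpNorm_eq_pow (by simp) (by simp), eLpNorm_eq_pow (by simp) (by simp)]
  simp only [ENNReal.toReal_ofNat]
  refine le_trans (le_of_eq ?_) h
  congr 1; ext x
  rw [prodConj_apply, enorm_mul, RCLike.enorm_conj]; rfl

lemma weight_bound (hd : 1 ≤ d) {p' : ℝ≥0∞} (ht : p' ≠ ∞) {θ : ℝ} (hs : 1 ≤ p'.toReal)
    (hθ : θ = 1 - 1 / p'.toReal) (hθ2 : θ ≤ 1 / 2)
    {γ : ℝ} (hγ : 0 < γ) (hγθ : γ < d - 2 * d * θ) :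
    ∃ D : ℝ≥0∞, D ≠ ∞ ∧ ∀ f g : SchwartzMap (EuclideanSpace ℝ (Fin d)) ℂ,
      ∫⁻ ξ : EuclideanSpace ℝ (Fin d), ENNReal.ofReal (‖ξ‖ ^ (γ - d)) * ‖𝓕 (prodConj f g : EuclideanSpace ℝ (Fin d) → ℂ) ξ‖ₑ ≤
        D * Xnorm d p' f * Xnorm d p' g := by
  have hp0 : p' ≠ 0 := by rintro rfl; simp at hs; linarith
  have hs0 : 0 < p'.toReal := by linarith
  have hθ0 : 0 ≤ θ := by rw [hθ, sub_nonneg, div_le_one hs0]; exact hs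
  set B := Metric.closedBall (0 : EuclideanSpace ℝ (Fin d)) 1 with hB
  set N : ℝ := d + (d - γ - 2 * d * θ) with hN
  have hNd : d < N := by rw [hN]; linarith
  set U : EuclideanSpace ℝ (Fin d) → ℝ≥0∞ := Bᶜ.indicator fun y => ENNReal.ofReal (‖y‖ ^ (-N)) with hU
  have hBm : MeasurableSet B := measurableSet_closedBall
  have hUm : Measurable U := Measurable.indicator (by fun_prop) hBm.compl
  have hUi : ∫⁻ y, U y < ∞ := by
    rw [hU, lintegral_indicator hBm.compl]; exact sing_out hNd
  set I1 := ∫⁻ y in B, ENNReal.ofReal (‖y‖ ^ (γ - d)) with hI1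
  have hI1f : I1 < ∞ := by
    have := sing_ball hd (s := d - γ) (by linarith)
    rw [hI1]; simpa using this
  have hθd : 0 ≤ 2 * d * θ := by positivity
  refine ⟨I1 + (∫⁻ y, U y) ^ (2 * θ), ?_, ?_⟩
  · exact ENNReal.add_ne_top.2 ⟨hI1f.ne, ENNReal.rpow_ne_top_of_nonneg (by positivity) hUi.ne⟩
  intro f g
  have hcf : Continuous (𝓕 (f : EuclideanSpace ℝ (Fin d) → ℂ)) := by
    rw [← SchwartzMap.fourier_coe]; exact (𝓕 f).continuous
  have hcg : Continuous (𝓕 (g : EuclideanSpace ℝ (Fin d) → ℂ)) := by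
    rw [← SchwartzMap.fourier_coe]; exact (𝓕 g).continuous
  rw [← lintegral_add_compl _ hBm, add_mul, add_mul]
  refine add_le_add ?_ ?_
  · calc _ ≤ ∫⁻ y in B, ENNReal.ofReal (‖y‖ ^ (γ - d)) * (eLpNorm f 2 volume * eLpNorm g 2 volume) := by
          apply lintegral_mono
          intro y
          simp only
          gcongr
          exact (enorm_fourier_le _ _).trans (prodConj_L1 f g)
      _ = I1 * (eLpNorm f 2 volume * eLpNorm g 2 volume) := by
          rw [lintegral_mul_const _ (by fun_prop)]
      _ ≤ I1 * (Xnorm d p' f * Xnorm d p' g) := by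
          unfold Xnorm
          gcongr
          · exact le_max_left _ _
          · exact le_max_left _ _
      _ = _ := by ring
  · have hy3 := young_three hUm (g₁ := fun η => ‖𝓕 (f : EuclideanSpace ℝ (Fin d) → ℂ) η‖ₑ)
      (g₂ := fun η => ‖𝓕 (g : EuclideanSpace ℝ (Fin d) → ℂ) η‖ₑ) hcf.enorm.measurable hcg.enorm.measurable hs hθ hθ2
    rw [← eLpNorm_eq_pow hp0 ht, ← eLpNorm_eq_pow hp0 ht] at hy3
    calc _ ≤ ∫⁻ ξ in Bᶜ, U ξ ^ (2 * θ) * ∫⁻ η, ‖𝓕 (f : EuclideanSpace ℝ (Fin d) → ℂ) η‖ₑ * ‖𝓕 (g : EuclideanSpace ℝ (Fin d) → ℂ) (η - ξ)‖ₑ := by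
          refine setLIntegral_mono' hBm.compl ?_
          intro ξ hξ
          have hξ1 : 1 < ‖ξ‖ := by simpa [hB] using hξ
          have hUξ : U ξ = ENNReal.ofReal (‖ξ‖ ^ (-N)) := by rw [hU, Set.indicator_of_mem hξ]
          gcongr
          · rw [hUξ, ENNReal.ofReal_rpow_of_nonneg (by positivity) (by positivity), ← Real.rpow_mul (by positivity)]
            apply ENNReal.ofReal_le_ofReal
            apply Real.rpow_le_rpow_of_exponent_le hξ1.le
            rw [hN]
            nlinarith
          · exact fourier_prodConj_le f g ξ
      _ ≤ _ := setLIntegral_le_lintegral _ _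
      _ ≤ _ := hy3
      _ ≤ _ := by
          unfold Xnorm
          gcongr
          · exact le_max_right _ _
          · exact le_max_right _ _

lemma main_bound (hd : 1 ≤ d) {p' : ℝ≥0∞} (ht : p' ≠ ∞) {θ : ℝ} (hs : 1 ≤ p'.toReal)
    (hθ : θ = 1 - 1 / p'.toReal) (hθ2 : θ ≤ 1 / 2)
    {γ : ℝ} (hγ : 0 < γ) (hγθ : γ < d - 2 * d * θ) :
    ∃ D : ℝ≥0∞, D ≠ ∞ ∧ ∀ a : ℝ, 0 ≤ a → ∀ f₁ f₂ f₃ : SchwartzMap (EuclideanSpace ℝ (Fin d)) ℂ,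
      Xnorm d p' (hartreeOp d a γ f₁ f₂ f₃) ≤ D * Xnorm d p' f₁ * Xnorm d p' f₂ * Xnorm d p' f₃ := by
  have hp0 : p' ≠ 0 := by rintro rfl; simp at hs; linarith
  have hs0 : 0 < p'.toReal := by linarith
  have hθ0 : 0 ≤ θ := by rw [hθ, sub_nonneg, div_le_one hs0]; exact hs
  have hθd : 0 ≤ 2 * d * θ := by positivity
  have hγd : γ < d := by linarith
  obtain ⟨C, hC, hCb⟩ := fourier_kernel_bound d hd hγ hγd
  obtain ⟨D, hD, hDb⟩ := weight_bound hd ht hs hθ hθ2 hγ hγθ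
  refine ⟨ENNReal.ofReal C * D, ENNReal.mul_ne_top ENNReal.ofReal_ne_top hD, ?_⟩
  intro a ha f₁ f₂ f₃
  set F := prodConj f₁ f₂ with hF
  have hFc : Continuous (𝓕 (F : EuclideanSpace ℝ (Fin d) → ℂ)) := by
    rw [← SchwartzMap.fourier_coe]; exact (𝓕 F).continuous
  have hcg : Continuous (𝓕 (f₃ : EuclideanSpace ℝ (Fin d) → ℂ)) := by
    rw [← SchwartzMap.fourier_coe]; exact (𝓕 f₃).continuous
  set A : EuclideanSpace ℝ (Fin d) → ℂ := fun ξ => ((Khat d a γ ‖ξ‖ : ℝ) : ℂ) * 𝓕 (F : EuclideanSpace ℝ (Fin d) → ℂ) ξ with hA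
  have hH : hartreeOp d a γ f₁ f₂ f₃ = fun x => 𝓕⁻ A x * f₃ x := by
    ext x
    unfold hartreeOp
    rw [hA, ← kernel_conv hd hγ hγd ha F x]
    simp only [hF, prodConj_apply]
  have hghm := measurable_gh d a
  have hKm : Measurable fun ξ : EuclideanSpace ℝ (Fin d) => Khat d a γ ‖ξ‖ := by
    have h1 : StronglyMeasurable fun r : ℝ => Khat d a γ r := by
      unfold Khat
      exact StronglyMeasurable.integral_prod_left' (f := fun q : (ℝ × ℝ) × ℝ => gh d (bb a q.1) q.2) hghm.stronglyMeasurable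
    exact h1.measurable.comp measurable_norm
  have hAm : Measurable A := (Complex.measurable_ofReal.comp hKm).mul hFc.measurable
  have hKb : ∀ ξ : EuclideanSpace ℝ (Fin d), ξ ≠ 0 → ‖((Khat d a γ ‖ξ‖ : ℝ) : ℂ)‖ₑ ≤ ENNReal.ofReal C * ENNReal.ofReal (‖ξ‖ ^ (γ - d)) := by
    intro ξ hξ
    rw [← ENNReal.ofReal_mul hC.le]
    have e : ‖((Khat d a γ ‖ξ‖ : ℝ) : ℂ)‖ₑ = ‖Khat d a γ ‖ξ‖‖ₑ := by
      rw [← ofReal_norm, Complex.norm_real, ofReal_norm]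
    rw [e]
    refine (enorm_integral_le_lintegral_enorm _).trans (le_trans (le_of_eq ?_) (hCb a ha _ (norm_pos_iff.2 hξ)))
    apply lintegral_congr_ae
    filter_upwards [bb_pos γ a] with w hw
    rw [← ofReal_norm, Real.norm_of_nonneg (gh_nonneg hw)]
  have hA1 : ∫⁻ ξ, ‖A ξ‖ₑ ≤ ENNReal.ofReal C * ∫⁻ ξ : EuclideanSpace ℝ (Fin d), ENNReal.ofReal (‖ξ‖ ^ (γ - d)) * ‖𝓕 (F : EuclideanSpace ℝ (Fin d) → ℂ) ξ‖ₑ := by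
    rw [← lintegral_const_mul _ (by have := hFc.measurable; fun_prop)]
    apply lintegral_mono_ae
    filter_upwards [ae_ne_zero hd] with ξ hξ
    rw [hA]
    simp only [enorm_mul]
    rw [← mul_assoc]
    gcongr
    exact hKb ξ hξ
  have hAi : Integrable A := by
    refine ⟨hAm.aestronglyMeasurable, lt_of_le_of_lt hA1 (ENNReal.mul_lt_top ENNReal.ofReal_lt_top ?_)⟩
    obtain ⟨M2, -, hM2⟩ := (𝓕 F).decay 0 0
    simp only [pow_zero, norm_iteratedFDeriv_zero, one_mul] at hM2
    have := sing_fin hd (s := d - γ) (by linarith) (by linarith) (𝓕 F).integrable hM2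
    simpa [SchwartzMap.fourier_coe] using this
  have hA2 : ∫⁻ ξ, ‖A ξ‖ₑ ≤ ENNReal.ofReal C * D * Xnorm d p' f₁ * Xnorm d p' f₂ := by
    refine hA1.trans ?_
    rw [mul_assoc, mul_assoc, ← mul_assoc D]
    gcongr
    exact hDb f₁ f₂
  have key : Xnorm d p' (hartreeOp d a γ f₁ f₂ f₃) ≤ (∫⁻ ξ, ‖A ξ‖ₑ) * Xnorm d p' f₃ := by
    rw [hH]
    unfold Xnorm
    apply max_le
    · refine le_trans ?_ (mul_le_mul_right (le_max_left _ _) _)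
      rw [eLpNorm_eq_pow (by simp) (by simp), eLpNorm_eq_pow (by simp) (by simp)]
      simp only [ENNReal.toReal_ofNat]
      calc _ ≤ (∫⁻ x, (∫⁻ ξ, ‖A ξ‖ₑ) ^ (2:ℝ) * ‖f₃ x‖ₑ ^ (2:ℝ)) ^ (1 / (2:ℝ)) := by
            gcongr with x
            rw [enorm_mul, ENNReal.mul_rpow_of_nonneg _ _ (by norm_num)]
            gcongr
            exact enorm_fourierInv_le _ _
        _ = _ := by
            rw [lintegral_const_mul _ (by have := f₃.continuous.measurable; fun_prop), ENNReal.mul_rpow_of_nonneg _ _ (by norm_num), ← ENNReal.rpow_mul]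
            norm_num
    · refine le_trans ?_ (mul_le_mul_right (le_max_right _ _) _)
      rw [eLpNorm_eq_pow hp0 ht, eLpNorm_eq_pow hp0 ht]
      calc _ ≤ (∫⁻ ξ, (∫⁻ η, ‖A η‖ₑ * ‖𝓕 (f₃ : EuclideanSpace ℝ (Fin d) → ℂ) (ξ - η)‖ₑ) ^ p'.toReal) ^ (1 / p'.toReal) := by
            gcongr with ξ
            rw [fourier_mul hAi f₃.integrable]
            refine (enorm_integral_le_lintegral_enorm _).trans (le_of_eq ?_)
            simp only [enorm_mul]
        _ ≤ ((∫⁻ η, ‖A η‖ₑ) ^ p'.toReal * ∫⁻ ξ, ‖𝓕 (f₃ : EuclideanSpace ℝ (Fin d) → ℂ) ξ‖ₑ ^ p'.toReal) ^ (1 / p'.toReal) := by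
            gcongr
            exact young_one hAm.enorm.aemeasurable hcg.enorm.measurable (g := fun ξ => ‖𝓕 (f₃ : EuclideanSpace ℝ (Fin d) → ℂ) ξ‖ₑ) hs
        _ = _ := by
            rw [ENNReal.mul_rpow_of_nonneg _ _ (by positivity), ← ENNReal.rpow_mul, mul_one_div_cancel hs0.ne', ENNReal.rpow_one]
  exact key.trans (by gcongr)

end final

end HartreeAux

/-- For `2 < p ≤ ∞` and `0 < γ < 2d(1/2 - 1/p)`:
`‖H_{a,γ}(f₁,f₂,f₃)‖_X ≤ C ‖f₁‖_X ‖f₂‖_X ‖f₃‖_X` on `X = L² ∩ L̂^p` for Schwartz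
functions, with `C = C(d,γ,p)` independent of `a ≥ 0`; `1/p + 1/p' = 1`. -/
theorem hartree_X_estimate (d : ℕ) (hd : 1 ≤ d)
    (p p' : ℝ≥0∞) (hp : 2 < p) (hpp' : 1 / p + 1 / p' = 1)
    (γ : ℝ) (hγ0 : 0 < γ) (hγ : γ < 2 * d * (1 / 2 - 1 / p.toReal)) :
    ∃ C : ℝ, 0 < C ∧ ∀ a : ℝ, 0 ≤ a →
      ∀ f₁ f₂ f₃ : SchwartzMap (EuclideanSpace ℝ (Fin d)) ℂ,
        Xnorm d p' (hartreeOp d a γ (⇑f₁) (⇑f₂) (⇑f₃)) ≤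
          ENNReal.ofReal C * Xnorm d p' (⇑f₁) * Xnorm d p' (⇑f₂) *
            Xnorm d p' (⇑f₃) := by
  have hd' : (0:ℝ) < d := by exact_mod_cast hd
  have h0 : p ≠ 0 := (lt_trans (by simp) hp).ne'
  have hinv : p⁻¹ < 1 / 2 := by rw [one_div]; exact ENNReal.inv_lt_inv.2 hp
  have hit : p⁻¹ ≠ ∞ := by simpa using h0
  simp only [one_div] at hpp'
  have hpi : p'⁻¹ = 1 - p⁻¹ := by
    rw [← hpp', ENNReal.add_sub_cancel_left hit]
  have hle1 : p⁻¹ ≤ 1 := by rw [← hpp']; exact le_self_add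
  have hti : p'.toReal⁻¹ = 1 - p.toReal⁻¹ := by
    rw [← ENNReal.toReal_inv, hpi, ENNReal.toReal_sub_of_le hle1 (by simp), ENNReal.toReal_inv]; simp
  have hpt : p.toReal⁻¹ < 1 / 2 := by
    rw [← ENNReal.toReal_inv]
    have := (ENNReal.toReal_lt_toReal hit (by simp)).2 hinv
    simpa using this
  have hpt0 : 0 ≤ p.toReal⁻¹ := by positivity
  have ht : p' ≠ ∞ := by
    rintro rfl
    simp at hti; linarith
  have hs0 : 0 < p'.toReal := by
    apply inv_pos.1; rw [hti]; linarith
  have hs : 1 ≤ p'.toReal := by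
    apply (inv_le_one₀ hs0).1; linarith
  obtain ⟨D, hD, hDb⟩ := HartreeAux.main_bound (d := d) hd ht (θ := p.toReal⁻¹) hs
    (by rw [one_div, hti]; ring) hpt.le (γ := γ) hγ0 (by rw [one_div p.toReal] at hγ; linarith)
  refine ⟨D.toReal + 1, by positivity, ?_⟩
  intro a ha f₁ f₂ f₃
  refine (hDb a ha f₁ f₂ f₃).trans ?_
  gcongr
  rw [← ENNReal.ofReal_toReal hD]
  apply ENNReal.ofReal_le_ofReal
  rw [ENNReal.ofReal_toReal hD]; linarith
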